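/- arXiv:2501.00931 — 2 statements merged into one kernel-verified Lean document; each statement's English description precedes it below -/
import Mathlib

section
/- Let S be a Noetherian regular local ring of characteristic p which is F-finite, A = S⟦π⟧, and K = A_π the localization of A away from π. Let m ≥ 1 and let n be an integer; let s be the least j with 0 ≤ j ≤ m−1 such that p^(m−1−j) divides n, and set i = n / p^(m−1−s) ∈ ℤ. Let ι : 𝕎 S → 𝕎 K be induced by S → K. Then the map b ↦ V^s(teichmuller(π^i)·ι(b)) induces a bijection from (truncated length m−s) Witt vectors of S onto the graded piece fil_{−n} W_m(K) / fil_{−n−1} W_m(K); concretely: (surjectivity) for every a ∈ 𝕎 K satisfying fil(π^{−n}, m) there exists b ∈ 𝕎 S such that a − V^s(teichmuller(π^i)·ι(b)) satisfies fil(π^{−n−1}, m); and (injectivity) for every b ∈ 𝕎 S, if V^s(teichmuller(π^i)·ι(b)) satisfies fil(π^{−n−1}, m) then b.coeff j = 0 for all j < m − s. -/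
/-- The Brylinski–Kato filtration condition on (truncated) Witt vectors, in Witt
coordinates: `a ∈ 𝕎 K` satisfies `fil(x, m)` if for every `j < m` the element
`x * (a.coeff j) ^ (p ^ (m - 1 - j))` lies in the image of `A` in `K`. -/
def WittFil (p : ℕ) [Fact p.Prime] (A : Type*) {K : Type*} [CommRing A] [CommRing K]
    [Algebra A K] (x : K) (m : ℕ) (a : WittVector p K) : Prop :=
  ∀ j < m, x * a.coeff j ^ p ^ (m - 1 - j) ∈ Set.range (algebraMap A K)

/-!
Write `A = S⟦π⟧`. As `A ⧸ (π) = S` is reduced, `π ^ N * c ^ q ∈ A` if and only if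
`π ^ ⌊N / q⌋ * c ∈ A`, so `fil(π ^ N, m)` bounds the pole of the `j`-th Witt coordinate
by `⌊N / p ^ (m - 1 - j)⌋`. Between `N = -n` and `N = -n - 1` this bound changes exactly for the
indices `j` with `p ^ (m - 1 - j) ∣ n`, that is for `j ≥ s`, where it drops by one. After shifting
down by `s` and multiplying by `teichmuller (π ^ (-i))`, which scales the `l`-th coordinate by
`π ^ (-i * p ^ l)`, the two filtration steps say that the first `m - s` coordinates lie in `A` and
in `π * A` respectively, and Witt vectors modulo `π` are those of `A ⧸ (π) = S`.

A regular local ring `R` is reduced, in fact a domain, by induction on the dimension: if `x` is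
the first of `dim R` generators of the maximal ideal, then `R ⧸ (x)` is again regular, so `(x)` is
prime by induction, and a prime `P` with `dim R ⧸ P > dim R ⧸ (x)` satisfies `P ⊆ (x)` and
`x ∉ P`, hence `P = x P` and so `P = 0`.
-/

section RegularLocalRing

open IsLocalRing

variable {R : Type*} [CommRing R]

theorem exists_isPrime_lt_ringKrullDim_quotient {a : WithBot ℕ∞} (ha : a < ringKrullDim R) :
    ∃ P : Ideal R, P.IsPrime ∧ a < ringKrullDim (R ⧸ P) := by
  obtain ⟨l, hl⟩ := lt_iSup_iff.mp ha
  refine ⟨l.head.asIdeal, l.head.isPrime, hl.trans_le ?_⟩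
  rw [ringKrullDim_quotient]
  exact Order.le_krullDim_iff.mpr ⟨⟨l.length, fun k => ⟨l k, l.head_le k⟩, l.step⟩, rfl⟩

theorem map_mk_span_range_fin_succ {d : ℕ} (v : Fin (d + 1) → R) :
    (Ideal.span (Set.range v)).map (Ideal.Quotient.mk (Ideal.span {v 0})) =
      Ideal.span (Set.range fun k : Fin d => Ideal.Quotient.mk (Ideal.span {v 0}) (v k.succ)) := by
  have hrange : Set.range v = insert (v 0) (Set.range fun k : Fin d => v k.succ) := by
    conv_lhs => rw [← Fin.cons_self_tail v, Fin.range_cons]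
    rfl
  have hzero : Ideal.Quotient.mk (Ideal.span {v 0}) (v 0) = 0 :=
    Ideal.Quotient.eq_zero_iff_mem.mpr (Ideal.mem_span_singleton_self _)
  rw [Ideal.map_span, hrange, Set.image_insert_eq, hzero, Ideal.span_insert_zero, ← Set.range_comp]
  rfl

variable [IsNoetherianRing R] [IsLocalRing R]

theorem ringKrullDim_quotient_le_quotient_span_singleton_of_not_le {x : R} (hx : x ∈ maximalIdeal R)
    [(Ideal.span {x}).IsPrime] {P : Ideal R} [P.IsPrime] (hP : ¬ P ≤ Ideal.span {x}) :
    ringKrullDim (R ⧸ P) ≤ ringKrullDim (R ⧸ Ideal.span {x}) := by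
  obtain ⟨y, hyP, hyx⟩ := SetLike.not_le_iff_exists.mp hP
  have : IsLocalRing (R ⧸ P) := .of_surjective' (Ideal.Quotient.mk P) Ideal.Quotient.mk_surjective
  have hxP : Ideal.Quotient.mk P x ∈ maximalIdeal (R ⧸ P) := by
    rw [← map_maximalIdeal_of_surjective _ Ideal.Quotient.mk_surjective]
    exact Ideal.mem_map_of_mem _ hx
  let f : R ⧸ Ideal.span {x} →+* (R ⧸ P) ⧸ Ideal.span {Ideal.Quotient.mk P x} :=
    Ideal.quotientMap _ (Ideal.Quotient.mk P) (by
      rw [Ideal.span_singleton_le_iff_mem, Ideal.mem_comap]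
      exact Ideal.mem_span_singleton_self _)
  have hf : Function.Surjective f := Ideal.quotientMap_surjective Ideal.Quotient.mk_surjective
  have hfy : f (Ideal.Quotient.mk _ y) = 0 := by
    rw [Ideal.quotientMap_mk, Ideal.Quotient.eq_zero_iff_mem.mpr hyP, map_zero]
  have hy : Ideal.Quotient.mk (Ideal.span {x}) y ∈ nonZeroDivisors _ :=
    mem_nonZeroDivisors_of_ne_zero (mt Ideal.Quotient.eq_zero_iff_mem.mp hyx)
  calc ringKrullDim (R ⧸ P)
      ≤ ringKrullDim ((R ⧸ P) ⧸ Ideal.span {Ideal.Quotient.mk P x}) + 1 := by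
        rw [← maximalIdeal_height_eq_ringKrullDim]
        exact Ideal.height_le_ringKrullDim_quotient_add_one hxP
    _ ≤ ringKrullDim (R ⧸ Ideal.span {x}) := ringKrullDim_succ_le_of_surjective f hf hy hfy

theorem isDomain_of_isPrime_span_singleton {x : R} (hx : x ∈ maximalIdeal R)
    [(Ideal.span {x}).IsPrime] (hdim : ringKrullDim (R ⧸ Ideal.span {x}) < ringKrullDim R) :
    IsDomain R := by
  obtain ⟨P, hP, hlt⟩ := exists_isPrime_lt_ringKrullDim_quotient hdim
  have hPx : P ≤ Ideal.span {x} := by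
    by_contra hle
    exact hlt.not_ge (ringKrullDim_quotient_le_quotient_span_singleton_of_not_le hx hle)
  have hxP : x ∉ P := fun h =>
    hlt.ne (by rw [le_antisymm hPx ((Ideal.span_singleton_le_iff_mem P).mpr h)])
  have hP_le : P ≤ maximalIdeal R • P := fun y hy => by
    obtain ⟨z, rfl⟩ := Ideal.mem_span_singleton'.mp (hPx hy)
    rw [smul_eq_mul, mul_comm z]
    exact Ideal.mul_mem_mul hx ((hP.mem_or_mem hy).resolve_right hxP)
  have hP_bot : P = ⊥ := Submodule.eq_bot_of_le_smul_of_le_jacobson_bot _ P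
    (IsNoetherian.noetherian P) hP_le (maximalIdeal_le_jacobson ⊥)
  rw [hP_bot] at hP
  exact IsDomain.of_bot_isPrime R

theorem ringKrullDim_le_of_span_range_eq_maximalIdeal {d : ℕ} {v : Fin d → R}
    (hv : Ideal.span (Set.range v) = maximalIdeal R) : ringKrullDim R ≤ d := by
  have hspan : (maximalIdeal R).spanFinrank ≤ (Set.range v).ncard :=
    hv ▸ Submodule.spanFinrank_span_le_ncard_of_finite (Set.finite_range v)
  have hcard : (Set.range v).ncard ≤ d := by
    simpa only [Nat.card_fin, Nat.card_coe_set_eq] using Finite.card_range_le v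
  exact (ringKrullDim_le_spanFinrank_maximalIdeal R).trans (mod_cast hspan.trans hcard)

theorem isDomain_of_span_range_eq_maximalIdeal {R : Type*} [CommRing R] [IsNoetherianRing R]
    [IsLocalRing R] {d : ℕ} {v : Fin d → R} (hv : Ideal.span (Set.range v) = maximalIdeal R)
    (hd : d ≤ ringKrullDim R) : IsDomain R := by
  induction d generalizing R with
  | zero =>
    rw [Set.range_eq_empty, Ideal.span_empty] at hv
    exact (isField_iff_maximalIdeal_eq.mpr hv.symm).isDomain
  | succ d ih =>
    have hx : v 0 ∈ maximalIdeal R := hv ▸ Ideal.subset_span ⟨0, rfl⟩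
    have : Nontrivial (R ⧸ Ideal.span {v 0}) :=
      Ideal.Quotient.nontrivial_iff.mpr (by rwa [Ne, Ideal.span_singleton_eq_top])
    have : IsLocalRing (R ⧸ Ideal.span {v 0}) :=
      .of_surjective' (Ideal.Quotient.mk _) Ideal.Quotient.mk_surjective
    have hv' : Ideal.span (Set.range fun k : Fin d => Ideal.Quotient.mk _ (v k.succ)) =
        maximalIdeal (R ⧸ Ideal.span {v 0}) := by
      rw [← map_mk_span_range_fin_succ, hv,
        map_maximalIdeal_of_surjective _ Ideal.Quotient.mk_surjective]
    have hle : ringKrullDim R ≤ ringKrullDim (R ⧸ Ideal.span {v 0}) + 1 := by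
      rw [← maximalIdeal_height_eq_ringKrullDim]
      exact Ideal.height_le_ringKrullDim_quotient_add_one hx
    have hdim : d ≤ ringKrullDim (R ⧸ Ideal.span {v 0}) :=
      ENat.WithBot.add_le_add_one_right_iff.mp (by exact_mod_cast hd.trans hle)
    have hdom := ih hv' hdim
    have : (Ideal.span {v 0}).IsPrime := (Ideal.Quotient.isDomain_iff_prime _).mp hdom
    refine isDomain_of_isPrime_span_singleton hx ?_
    calc ringKrullDim (R ⧸ Ideal.span {v 0})
        ≤ d := ringKrullDim_le_of_span_range_eq_maximalIdeal hv'
      _ < (d + 1 : ℕ) := by exact_mod_cast d.lt_succ_self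
      _ ≤ ringKrullDim R := hd

end RegularLocalRing

section Units

variable {M : Type*} [Monoid M]

theorem val_zpow_add (u : Mˣ) (N N' : ℤ) :
    ((u ^ (N + N') : Mˣ) : M) = (u ^ N : Mˣ) * (u ^ N' : Mˣ) := by
  rw [zpow_add, Units.val_mul]

theorem val_zpow_mul_natCast (u : Mˣ) (N : ℤ) (q : ℕ) :
    ((u ^ (N * q) : Mˣ) : M) = ((u ^ N : Mˣ) : M) ^ q := by
  rw [zpow_mul, zpow_natCast, Units.val_pow_eq_pow_val]

end Units

section Localization

open IsLocalization (IsInteger)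

variable {A K : Type*} [CommRing A] [CommRing K] [Algebra A K] {t : A} {u : Kˣ}

theorem isInteger_inv_mul_algebraMap_iff (hinj : Function.Injective (algebraMap A K))
    (hu : (u : K) = algebraMap A K t) (a : A) :
    IsInteger A ((u⁻¹ : Kˣ) * algebraMap A K a) ↔ t ∣ a := by
  refine exists_congr fun c => ?_
  rw [eq_comm, Units.inv_mul_eq_iff_eq_mul, hu, ← map_mul, hinj.eq_iff]

theorem isInteger_of_isInteger_mul_of_isInteger_pow (hinj : Function.Injective (algebraMap A K))
    (hu : (u : K) = algebraMap A K t) (ht : IsRadical t)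
    {N q : ℕ} (hNq : N < q) {x : K} (hux : IsInteger A (u * x))
    (hx : IsInteger A ((u : K) ^ N * x ^ q)) : IsInteger A x := by
  obtain ⟨k, rfl⟩ := Nat.exists_eq_add_of_lt hNq
  obtain ⟨a, ha⟩ := hux
  obtain ⟨b, hb⟩ := hx
  have hpow : a ^ (N + k + 1) = t * (t ^ k * b) := by
    apply hinj
    simp only [map_pow, map_mul, ha, hb, ← hu]
    ring
  obtain ⟨c, rfl⟩ := ht _ a (Dvd.intro _ hpow.symm)
  refine ⟨c, u.isUnit.mul_left_cancel ?_⟩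
  rw [← ha, map_mul, hu]

theorem isInteger_of_isInteger_pow_mul [IsLocalization.Away t K]
    (hinj : Function.Injective (algebraMap A K))
    (hu : (u : K) = algebraMap A K t) (ht : IsRadical t)
    {N q : ℕ} (hNq : N < q) {c : K} (hc : IsInteger A ((u : K) ^ N * c ^ q)) : IsInteger A c := by
  obtain ⟨k, a, ha⟩ := IsLocalization.Away.surj t c
  have hk : IsInteger A ((u : K) ^ k * c) := ⟨a, by rw [← ha, hu, mul_comm]⟩
  clear ha
  induction k with
  | zero => simpa using hk
  | succ k ih =>
    refine ih (isInteger_of_isInteger_mul_of_isInteger_pow hinj hu ht hNq ?_ ?_)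
    · rwa [← mul_assoc, ← pow_succ']
    · rw [mul_pow, mul_left_comm]
      exact IsLocalization.isInteger_mul ⟨(t ^ k) ^ q, by simp only [map_pow, hu]⟩ hc

theorem isInteger_zpow_mul_pow_iff [IsLocalization.Away t K]
    (hinj : Function.Injective (algebraMap A K))
    (hu : (u : K) = algebraMap A K t) (ht : IsRadical t)
    (N : ℤ) {q : ℕ} (hq : 0 < q) (c : K) :
    IsInteger A (((u ^ N : Kˣ) : K) * c ^ q) ↔ IsInteger A (((u ^ (N / q) : Kˣ) : K) * c) := by
  have hq' : (0 : ℤ) < q := mod_cast hq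
  obtain ⟨r, hr⟩ := Int.eq_ofNat_of_zero_le (Int.emod_nonneg N hq'.ne')
  have hrq : r < q := by exact_mod_cast hr ▸ Int.emod_lt_of_pos N hq'
  have hN : ((u ^ N : Kˣ) : K) * c ^ q = (u : K) ^ r * (((u ^ (N / q) : Kˣ) : K) * c) ^ q := by
    rw [mul_pow, ← val_zpow_mul_natCast, ← mul_assoc, ← Units.val_pow_eq_pow_val, ← zpow_natCast,
      ← val_zpow_add, ← hr, mul_comm _ (q : ℤ), Int.emod_add_mul_ediv]
  rw [hN]
  refine ⟨isInteger_of_isInteger_pow_mul hinj hu ht hrq, fun ⟨a, ha⟩ => ?_⟩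
  exact ⟨t ^ r * a ^ q, by rw [map_mul, map_pow, map_pow, ha, hu]⟩

end Localization

section Exponents

theorem sub_one_ediv_of_not_dvd {q n : ℤ} (hq : 0 < q) (hqn : ¬ q ∣ n) : (n - 1) / q = n / q := by
  rw [Int.ediv_eq_iff_of_pos hq]
  have := Int.emod_pos_of_not_dvd hqn
  have := Int.emod_add_mul_ediv n q
  have := Int.emod_lt_of_pos n hq
  constructor <;> grind

theorem mul_sub_one_ediv {q : ℤ} (hq : 0 < q) (k : ℤ) : (q * k - 1) / q = k - 1 := by
  rw [Int.ediv_eq_iff_of_pos hq]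
  constructor <;> linarith

theorem forall_lt_iff_forall_lt_and_forall_add_lt {P : ℕ → Prop} {s m : ℕ} :
    (∀ j < m, P j) ↔ (∀ j < s, j < m → P j) ∧ ∀ l < m - s, P (s + l) := by
  refine ⟨fun h => ⟨fun j _ => h j, fun l hl => h _ (by omega)⟩, fun ⟨hlow, hhigh⟩ j hj => ?_⟩
  rcases lt_or_ge j s with hjs | hsj
  · exact hlow j hjs hj
  · obtain ⟨l, rfl⟩ := Nat.exists_eq_add_of_le hsj
    exact hhigh l (by omega)

theorem pow_sub_mul_eq_pow_sub_add_mul {M : Type*} [CommMonoid M] {m s l : ℕ} (hl : l < m - s)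
    (x y : M) : x ^ (m - 1 - s) * y = x ^ (m - 1 - (s + l)) * (y * x ^ l) := by
  rw [show m - 1 - s = m - 1 - (s + l) + l by omega, pow_add, mul_assoc, mul_comm y]

end Exponents

section WittVector

open WittVector

variable {p : ℕ} [Fact p.Prime] {R : Type*} [CommRing R]

theorem teichmuller_mul_eq_mk_of_invertible [Invertible (p : R)] (r : R) (x : WittVector p R) :
    teichmuller p r * x = WittVector.mk p fun n => r ^ p ^ n * x.coeff n := by
  apply (ghostMap.bijective_of_invertible p R).1
  ext1 n
  simp only [map_mul, ghostMap_apply, ghostComponent_teichmuller]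
  simp only [ghostComponent_apply, aeval_wittPolynomial, Finset.mul_sum]
  refine Finset.sum_congr rfl fun j hj => ?_
  have hjn : j + (n - j) = n := Nat.add_sub_cancel' (Finset.mem_range_succ_iff.mp hj)
  rw [coeff_mk, mul_pow, ← pow_mul, ← pow_add, hjn]
  ring

theorem map_mk_pow_mul_coeff {R' : Type*} [CommRing R'] (f : R →+* R') (r : R)
    (x : WittVector p R) :
    WittVector.map f (WittVector.mk p fun n => r ^ p ^ n * x.coeff n) =
      WittVector.mk p fun n => f r ^ p ^ n * (WittVector.map f x).coeff n := by
  ext n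
  simp only [map_coeff, coeff_mk, map_mul, map_pow]

theorem teichmuller_mul_eq_mk (r : R) (x : WittVector p R) :
    teichmuller p r * x = WittVector.mk p fun n => r ^ p ^ n * x.coeff n := by
  obtain ⟨r, rfl⟩ := MvPolynomial.counit_surjective R r
  obtain ⟨x, rfl⟩ := map_surjective _ (MvPolynomial.counit_surjective R) x
  have hint : teichmuller p r * x = WittVector.mk p fun n => r ^ p ^ n * x.coeff n := by
    apply map_injective (MvPolynomial.map (Int.castRingHom ℚ))
      (MvPolynomial.map_injective _ Int.cast_injective)
    rw [map_mul, map_teichmuller, teichmuller_mul_eq_mk_of_invertible, map_mk_pow_mul_coeff]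
  rw [← map_teichmuller, ← map_mul, hint, map_mk_pow_mul_coeff]

theorem coeff_teichmuller_mul (r : R) (x : WittVector p R) (n : ℕ) :
    (teichmuller p r * x).coeff n = r ^ p ^ n * x.coeff n := by
  rw [teichmuller_mul_eq_mk, coeff_mk]

theorem shift_iterate_verschiebung (s : ℕ) (x : WittVector p R) :
    (verschiebung^[s] x).shift s = x := by
  ext l
  rw [shift_coeff, add_comm, iterate_verschiebung_coeff]

theorem init_add_iterate_verschiebung_shift (s : ℕ) (a : WittVector p R) :
    init s a + verschiebung^[s] (a.shift s) = a := by
  have htail : tail s a = verschiebung^[s] (a.shift s) := by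
    rw [eq_iterate_verschiebung (x := tail s a) (n := s)]
    · congr 1
      ext l
      simp [shift_coeff, tail, select]
    · intro l hl
      simp [tail, select, hl]
  rw [← htail, init_add_tail]

theorem coeff_init_add_iterate_verschiebung (s : ℕ) (a x : WittVector p R) (l : ℕ) :
    (init s a + verschiebung^[s] x).coeff l =
      (init s a).coeff l + (verschiebung^[s] x).coeff l := by
  refine coeff_add_of_disjoint l _ _ fun k => ?_
  rcases lt_or_ge k s with hk | hk
  · exact Or.inr (iterate_verschiebung_coeff_eq_zero x hk)
  · exact Or.inl (by simp only [init, select, coeff_mk, if_neg hk.not_gt])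

theorem sub_iterate_verschiebung (s : ℕ) (a x : WittVector p R) :
    a - verschiebung^[s] x = init s a + verschiebung^[s] (a.shift s - x) := by
  rw [iterate_map_sub, ← add_sub_assoc, init_add_iterate_verschiebung_shift]

theorem coeff_sub_iterate_verschiebung_of_lt {s j : ℕ} (hj : j < s) (a x : WittVector p R) :
    (a - verschiebung^[s] x).coeff j = a.coeff j := by
  rw [sub_iterate_verschiebung, coeff_init_add_iterate_verschiebung,
    iterate_verschiebung_coeff_eq_zero _ hj, add_zero]
  simp only [init, select, coeff_mk, if_pos hj]

theorem shift_sub_iterate_verschiebung (s : ℕ) (a x : WittVector p R) :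
    (a - verschiebung^[s] x).shift s = a.shift s - x := by
  ext l
  rw [sub_iterate_verschiebung, shift_coeff, coeff_init_add_iterate_verschiebung, add_comm s,
    iterate_verschiebung_coeff]
  simp only [init, select, coeff_mk, if_neg (Nat.le_add_left s l).not_gt, zero_add]

theorem coeff_sub_congr {k : ℕ} {x y : WittVector p R} (h : ∀ l < k, x.coeff l = y.coeff l)
    (z : WittVector p R) {l : ℕ} (hl : l < k) : (x - z).coeff l = (y - z).coeff l := by
  have htrunc : truncate k x = truncate k y := TruncatedWittVector.ext fun l => by
    simpa only [coeff_truncate] using h l l.2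
  have htrunc_sub : truncate k (x - z) = truncate k (y - z) := by rw [map_sub, htrunc, map_sub]
  simpa only [coeff_truncate] using congrArg (TruncatedWittVector.coeff ⟨l, hl⟩) htrunc_sub

end WittVector

section WittFil

open IsLocalization (IsInteger)
open WittVector

variable {p : ℕ} [Fact p.Prime] {A K : Type*} [CommRing A] [CommRing K] [Algebra A K]
  {t : A} {u : Kˣ} [IsLocalization.Away t K]

theorem wittFil_zpow_iff (hinj : Function.Injective (algebraMap A K))
    (hu : (u : K) = algebraMap A K t) (ht : IsRadical t) (N : ℤ) (m : ℕ) (a : WittVector p K) :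
    WittFil p A ((u ^ N : Kˣ) : K) m a ↔
      ∀ j < m, IsInteger A (((u ^ (N / (p : ℤ) ^ (m - 1 - j)) : Kˣ) : K) * a.coeff j) :=
  forall₂_congr fun j _ => by
    have hq : 0 < p ^ (m - 1 - j) := pow_pos (Fact.out (p := p.Prime)).pos _
    exact_mod_cast isInteger_zpow_mul_pow_iff hinj hu ht N hq (a.coeff j)

theorem coeff_teichmuller_zpow_neg_mul_shift (i : ℤ) (s l : ℕ) (a : WittVector p K) :
    (teichmuller p ((u ^ (-i) : Kˣ) : K) * a.shift s).coeff l =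
      ((u ^ (-(i * (p : ℤ) ^ l)) : Kˣ) : K) * a.coeff (s + l) := by
  rw [coeff_teichmuller_mul, shift_coeff, ← neg_mul, ← Nat.cast_pow, val_zpow_mul_natCast]

theorem wittFil_zpow_neg_iff (hinj : Function.Injective (algebraMap A K))
    (hu : (u : K) = algebraMap A K t) (ht : IsRadical t) {m s : ℕ} {n i : ℤ}
    (hi : n = (p : ℤ) ^ (m - 1 - s) * i) (a : WittVector p K) :
    WittFil p A ((u ^ (-n) : Kˣ) : K) m a ↔
      (∀ j < s, j < m →
        IsInteger A (((u ^ (-n / (p : ℤ) ^ (m - 1 - j)) : Kˣ) : K) * a.coeff j)) ∧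
      ∀ l < m - s,
        IsInteger A ((teichmuller p ((u ^ (-i) : Kˣ) : K) * a.shift s).coeff l) := by
  rw [wittFil_zpow_iff hinj hu ht, forall_lt_iff_forall_lt_and_forall_add_lt (s := s)]
  refine and_congr_right fun _ => forall₂_congr fun l hl => ?_
  have hq : (p : ℤ) ^ (m - 1 - (s + l)) ≠ 0 := pow_ne_zero _ (mod_cast (Fact.out : p.Prime).ne_zero)
  rw [coeff_teichmuller_zpow_neg_mul_shift, hi, pow_sub_mul_eq_pow_sub_add_mul hl, ← mul_neg,
    Int.mul_ediv_cancel_left _ hq]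

theorem wittFil_zpow_neg_sub_one_iff (hinj : Function.Injective (algebraMap A K))
    (hu : (u : K) = algebraMap A K t) (ht : IsRadical t) {m s : ℕ} {n i : ℤ}
    (hsmin : ∀ j < s, ¬ (p : ℤ) ^ (m - 1 - j) ∣ n) (hi : n = (p : ℤ) ^ (m - 1 - s) * i)
    (a : WittVector p K) :
    WittFil p A ((u ^ (-n - 1) : Kˣ) : K) m a ↔
      (∀ j < s, j < m →
        IsInteger A (((u ^ (-n / (p : ℤ) ^ (m - 1 - j)) : Kˣ) : K) * a.coeff j)) ∧
      ∀ l < m - s,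
        IsInteger A ((u⁻¹ : Kˣ) * (teichmuller p ((u ^ (-i) : Kˣ) : K) * a.shift s).coeff l) := by
  have hq (k : ℕ) : (0 : ℤ) < (p : ℤ) ^ k := pow_pos (mod_cast (Fact.out : p.Prime).pos) _
  rw [wittFil_zpow_iff hinj hu ht, forall_lt_iff_forall_lt_and_forall_add_lt (s := s)]
  refine and_congr (forall₃_congr fun j hj _ => ?_) (forall₂_congr fun l hl => ?_)
  · rw [sub_one_ediv_of_not_dvd (hq _) (mt dvd_neg.mp (hsmin j hj))]
  · rw [coeff_teichmuller_zpow_neg_mul_shift, ← mul_assoc, ← zpow_neg_one, ← val_zpow_add, hi,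
      pow_sub_mul_eq_pow_sub_add_mul hl, ← mul_neg, mul_sub_one_ediv (hq _), neg_add_eq_sub]

end WittFil

section ResidueRing

open IsLocalization (IsInteger)
open WittVector

variable {p : ℕ} [Fact p.Prime] {S A K : Type*} [CommRing S] [CommRing A] [CommRing K]
  [Algebra S A] [Algebra A K] {t : A} {u : Kˣ}

theorem isRadical_of_bijective_algebraMap_quotient [IsReduced S]
    (hbij : Function.Bijective (algebraMap S (A ⧸ Ideal.span {t}))) : IsRadical t := by
  have : IsReduced (A ⧸ Ideal.span {t}) :=
    isReduced_of_injective (RingEquiv.ofBijective _ hbij).symm (RingEquiv.injective _)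
  rwa [isRadical_iff_span_singleton, Ideal.isRadical_iff_quotient_reduced]

theorem exists_forall_dvd_coeff_sub_map
    (hsurj : Function.Surjective (algebraMap S (A ⧸ Ideal.span {t}))) (c : WittVector p A) :
    ∃ b : WittVector p S, ∀ l, t ∣ (c - WittVector.map (algebraMap S A) b).coeff l := by
  obtain ⟨b, hb⟩ := map_surjective _ hsurj (WittVector.map (Ideal.Quotient.mk (Ideal.span {t})) c)
  refine ⟨b, fun l => ?_⟩
  have hzero : WittVector.map (Ideal.Quotient.mk (Ideal.span {t}))
      (c - WittVector.map (algebraMap S A) b) = 0 := by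
    rw [map_sub, ← hb, sub_eq_zero]
    ext l
    simp only [map_coeff]
    rfl
  rw [← Ideal.Quotient.eq_zero_iff_dvd, ← map_coeff, hzero, zero_coeff]

theorem exists_forall_isInteger_inv_mul_coeff_sub_map [Algebra S K] [IsScalarTower S A K]
    (hinj : Function.Injective (algebraMap A K)) (hu : (u : K) = algebraMap A K t)
    (hsurj : Function.Surjective (algebraMap S (A ⧸ Ideal.span {t}))) {k : ℕ} {y : WittVector p K}
    (hy : ∀ l < k, IsInteger A (y.coeff l)) :
    ∃ b : WittVector p S, ∀ l < k,
      IsInteger A ((u⁻¹ : Kˣ) * (y - WittVector.map (algebraMap S K) b).coeff l) := by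
  choose! c hc using hy
  obtain ⟨b, hb⟩ := exists_forall_dvd_coeff_sub_map hsurj (WittVector.mk p c)
  refine ⟨b, fun l hl => ?_⟩
  have hyc : ∀ l < k, y.coeff l = (WittVector.map (algebraMap A K) (WittVector.mk p c)).coeff l :=
    fun l hl => by rw [map_coeff, coeff_mk, hc l hl]
  have hmap : WittVector.map (algebraMap S K) b =
      WittVector.map (algebraMap A K) (WittVector.map (algebraMap S A) b) := by
    ext l
    simp only [map_coeff, ← IsScalarTower.algebraMap_apply]
  rw [coeff_sub_congr hyc _ hl, hmap, ← map_sub, map_coeff,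
    isInteger_inv_mul_algebraMap_iff hinj hu]
  exact hb l

theorem bijective_algebraMap_quotient_span_X (S : Type*) [CommRing S] :
    Function.Bijective
      (algebraMap S (PowerSeries S ⧸ Ideal.span {(PowerSeries.X : PowerSeries S)})) := by
  constructor
  · refine (injective_iff_map_eq_zero _).mpr fun r hr => ?_
    have hdvd : PowerSeries.X ∣ PowerSeries.C r := Ideal.Quotient.eq_zero_iff_dvd _ _ |>.mp hr
    rwa [PowerSeries.X_dvd_iff, PowerSeries.constantCoeff_C] at hdvd
  · refine fun f => ?_
    obtain ⟨f, rfl⟩ := Ideal.Quotient.mk_surjective f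
    refine ⟨PowerSeries.constantCoeff f, Ideal.Quotient.eq.mpr ?_⟩
    rw [Ideal.mem_span_singleton, PowerSeries.X_dvd_iff, map_sub]
    exact sub_eq_zero.mpr (PowerSeries.constantCoeff_C _)

end ResidueRing

theorem wittFil_graded_piece_bijection_general
    (p : ℕ) [Fact p.Prime]
    (S : Type*) [CommRing S] [IsReduced S] (A : Type*) [CommRing A] [Algebra S A]
    (t : A) (ht : t ∈ nonZeroDivisors A)
    (hbij : Function.Bijective (algebraMap S (A ⧸ Ideal.span {t})))
    (K : Type*) [CommRing K] [Algebra A K] [IsLocalization.Away t K]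
    [Algebra S K] [IsScalarTower S A K]
    (u : Kˣ) (hu : (u : K) = algebraMap A K t) (m : ℕ) (n : ℤ) (s : ℕ)
    (hsmin : ∀ j < s, ¬ (p : ℤ) ^ (m - 1 - j) ∣ n)
    (i : ℤ) (hi : n = (p : ℤ) ^ (m - 1 - s) * i) :
    (∀ a : WittVector p K, WittFil p A ((u ^ (-n) : Kˣ) : K) m a →
      ∃ b : WittVector p S,
        WittFil p A ((u ^ (-n - 1) : Kˣ) : K) m
          (a - WittVector.verschiebung^[s]
            (WittVector.teichmuller p ((u ^ i : Kˣ) : K) *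
              WittVector.map (algebraMap S K) b))) ∧
    (∀ b : WittVector p S,
      WittFil p A ((u ^ (-n - 1) : Kˣ) : K) m
        (WittVector.verschiebung^[s]
          (WittVector.teichmuller p ((u ^ i : Kˣ) : K) *
            WittVector.map (algebraMap S K) b)) →
      ∀ j < m - s, b.coeff j = 0) := by
  have hinj : Function.Injective (algebraMap A K) :=
    IsLocalization.injective K (Submonoid.powers_le.mpr ht)
  have htrad := isRadical_of_bijective_algebraMap_quotient hbij
  have hcancel (x : WittVector p K) : WittVector.teichmuller p ((u ^ (-i) : Kˣ) : K) *
      (WittVector.teichmuller p ((u ^ i : Kˣ) : K) * x) = x := by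
    rw [← mul_assoc, ← map_mul, ← val_zpow_add, neg_add_cancel, zpow_zero, Units.val_one, map_one,
      one_mul]
  refine ⟨fun a ha => ?_, fun b hb l hl => ?_⟩
  · obtain ⟨hlow, hhigh⟩ := (wittFil_zpow_neg_iff hinj hu htrad hi a).mp ha
    obtain ⟨b, hb⟩ := exists_forall_isInteger_inv_mul_coeff_sub_map hinj hu hbij.surjective hhigh
    refine ⟨b, (wittFil_zpow_neg_sub_one_iff hinj hu htrad hsmin hi _).mpr
      ⟨fun j hjs hjm => ?_, fun l hl => ?_⟩⟩
    · rw [coeff_sub_iterate_verschiebung_of_lt hjs]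
      exact hlow j hjs hjm
    · rw [shift_sub_iterate_verschiebung, mul_sub, hcancel]
      exact hb l hl
  · have hbl := ((wittFil_zpow_neg_sub_one_iff hinj hu htrad hsmin hi _).mp hb).2 l hl
    rw [shift_iterate_verschiebung, hcancel, WittVector.map_coeff,
      IsScalarTower.algebraMap_apply S A K, isInteger_inv_mul_algebraMap_iff hinj hu,
      ← Ideal.Quotient.eq_zero_iff_dvd] at hbl
    exact hbij.injective (hbl.trans (map_zero _).symm)

/-- Let `S` be an `F`-finite Noetherian regular local ring of
characteristic `p`, `A = S⟦π⟧`, `K = A_π` (with `π` a unit `u` of `K`).  Let `m ≥ 1`,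
`n ∈ ℤ`, `s` the least `j ≤ m-1` with `p^(m-1-j) ∣ n`, and `i = n / p^(m-1-s)`.
Then `b ↦ V^s(teichmuller(π^i)·ι(b))` induces a bijection of the length-`(m-s)`
truncated Witt vectors of `S` onto `fil_{-n} W_m(K) / fil_{-n-1} W_m(K)`:
(surjectivity) every `a` satisfying `fil(π^{-n}, m)` differs from some
`V^s(teichmuller(π^i)·ι(b))` by an element satisfying `fil(π^{-n-1}, m)`; and
(injectivity) if `V^s(teichmuller(π^i)·ι(b))` satisfies `fil(π^{-n-1}, m)` then
`b.coeff j = 0` for all `j < m - s`. -/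
theorem wittFil_graded_piece_bijection
    (p : ℕ) [Fact p.Prime]
    (S : Type*) [CommRing S] [IsNoetherianRing S] [IsLocalRing S] [CharP S p]
    (hreg : ∃ (d : ℕ) (v : Fin d → S),
      Ideal.span (Set.range v) = IsLocalRing.maximalIdeal S ∧ ringKrullDim S = d)
    (hF : (frobenius S p).Finite)
    (K : Type*) [CommRing K] [Algebra (PowerSeries S) K]
    [IsLocalization.Away (PowerSeries.X : PowerSeries S) K]
    [Algebra S K] [IsScalarTower S (PowerSeries S) K]
    (u : Kˣ) (hu : (u : K) = algebraMap (PowerSeries S) K PowerSeries.X)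
    (m : ℕ) (hm : 1 ≤ m) (n : ℤ)
    (s : ℕ) (hs : s ≤ m - 1) (hsdvd : (p : ℤ) ^ (m - 1 - s) ∣ n)
    (hsmin : ∀ j < s, ¬ (p : ℤ) ^ (m - 1 - j) ∣ n)
    (i : ℤ) (hi : n = (p : ℤ) ^ (m - 1 - s) * i) :
    (∀ a : WittVector p K, WittFil p (PowerSeries S) ((u ^ (-n) : Kˣ) : K) m a →
      ∃ b : WittVector p S,
        WittFil p (PowerSeries S) ((u ^ (-n - 1) : Kˣ) : K) m
          (a - (fun c : WittVector p K => WittVector.verschiebung c)^[s]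
            (WittVector.teichmuller p ((u ^ i : Kˣ) : K) *
              WittVector.map (algebraMap S K) b))) ∧
    (∀ b : WittVector p S,
      WittFil p (PowerSeries S) ((u ^ (-n - 1) : Kˣ) : K) m
        ((fun c : WittVector p K => WittVector.verschiebung c)^[s]
          (WittVector.teichmuller p ((u ^ i : Kˣ) : K) *
            WittVector.map (algebraMap S K) b)) →
      ∀ j < m - s, b.coeff j = 0) := by
  obtain ⟨d, v, hv, hd⟩ := hreg
  have : IsDomain S := isDomain_of_span_range_eq_maximalIdeal hv hd.ge
  exact wittFil_graded_piece_bijection_general p S (PowerSeries S) PowerSeries.X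
    (mem_nonZeroDivisors_of_ne_zero PowerSeries.X_ne_zero) (bijective_algebraMap_quotient_span_X S)
    K u hu m n s hsmin i hi
end

section
/- Let R be a commutative Noetherian local ring with maximal ideal 𝔪, and let M be a finitely generated R-module. Let M^∧ = AdicCompletion 𝔪 M be the 𝔪-adic completion of M, regarded as a module over R^∧ = AdicCompletion 𝔪 R, with canonical map of : M → M^∧. Let N' be an R^∧-submodule of M^∧ and N an R-submodule of M such that of(y) ∈ N' for every y ∈ N, and such that N is 𝔪-adically dense in N': for every x ∈ N' and every k ∈ ℕ there exists y ∈ N with x − of(y) ∈ 𝔪^k · M^∧. Then: (a) N = {z ∈ M : of(z) ∈ N'}, i.e. for every z ∈ M with of(z) ∈ N' one has z ∈ N; and (b) N' is closed, i.e. N' = {x ∈ M^∧ : for every k ∈ ℕ there exists y ∈ N with x − of(y) ∈ 𝔪^k · M^∧}; in other words N' is the 𝔪-adic completion (closure) of N inside M^∧. -/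
/-! By Artin–Rees, a sequence in `N` that converges in the completion of `M` is already Cauchy for
the adic topology of `N`, so its limit comes from the completion of `N`. As `N` is finite, that
completion is spanned by `N` over the completed ring, so every adherent point of `N` lies in `N'`.
On the other hand, an element of `M` adherent to `N` maps into every `𝔪 ^ k • (M ⧸ N)`, hence
to zero by Krull's intersection theorem. -/

section AdicClosure

open AdicCompletion Submodule

variable {R : Type*} [CommRing R] (I : Ideal R) {M : Type*} [AddCommGroup M] [Module R M]

/-- The closure in the `I`-adic completion of `M` of the image of a submodule `N`, for the topology
whose basic neighbourhoods of zero are the submodules `I ^ k • ⊤` of the completion. It is encoded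
as a plain set, since only membership in it matters. -/
def adicClosure (N : Submodule R M) : Set (AdicCompletion I M) :=
  {x | ∀ k : ℕ, ∃ y ∈ N, x - of I M y ∈ I ^ k • (⊤ : Submodule R (AdicCompletion I M))}

variable {I}

theorem eval_eq_mk_of_sub_of_mem_pow_smul {x : AdicCompletion I M} {y : M} {m k : ℕ} (hmk : m ≤ k)
    (hxy : x - of I M y ∈ I ^ k • (⊤ : Submodule R (AdicCompletion I M))) :
    eval I M m x = Submodule.Quotient.mk y := by
  have hker := pow_smul_top_le_ker_eval I m (pow_smul_top_le I _ hmk hxy)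
  rwa [LinearMap.mem_ker, map_sub, eval_of, sub_eq_zero] at hker

theorem mem_of_of_mem_adicClosure {N : Submodule R M} [IsHausdorff I (M ⧸ N)] {z : M}
    (hz : of I M z ∈ adicClosure I N) : z ∈ N := by
  rw [← Quotient.mk_eq_zero N]
  refine IsHausdorff.haus ‹_› _ fun k ↦ SModEq.zero.2 ?_
  obtain ⟨y, hy, hzy⟩ := hz k
  have sub_mem : z - y ∈ I ^ k • (⊤ : Submodule R M) :=
    (Submodule.Quotient.eq _).1 (eval_eq_mk_of_sub_of_mem_pow_smul le_rfl hzy)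
  have mk_sub_mem := smul_top_le_comap_smul_top (I ^ k) N.mkQ sub_mem
  rwa [mem_comap, map_sub, mkQ_apply, mkQ_apply, (Quotient.mk_eq_zero N).2 hy, sub_zero]
    at mk_sub_mem

variable (I)

theorem exists_comap_subtype_pow_smul_top_le [IsNoetherianRing R] [Module.Finite R M]
    (N : Submodule R M) :
    ∃ c : ℕ, ∀ n : ℕ, comap N.subtype (I ^ (n + c) • ⊤) ≤ I ^ n • ⊤ := by
  obtain ⟨c, hc⟩ := Ideal.exists_pow_inf_eq_pow_smul I N
  refine ⟨c, fun n ↦ ?_⟩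
  rw [← map_le_map_iff_of_injective N.subtype_injective, map_comap_subtype, map_smul'',
    map_subtype_top, inf_comm, hc _ (Nat.le_add_left c n), Nat.add_sub_cancel]
  exact smul_mono_right _ inf_le_right

theorem adicClosure_subset_range_map_subtype [IsNoetherianRing R] [Module.Finite R M]
    (N : Submodule R M) : adicClosure I N ⊆ LinearMap.range (map I N.subtype) := by
  intro x hx
  choose y hyN hxy using hx
  obtain ⟨c, hc⟩ := exists_comap_subtype_pow_smul_top_le I N
  let b (n : ℕ) : N := ⟨y (n + c), hyN (n + c)⟩
  have eval_eq {m k : ℕ} (hmk : m ≤ k) : eval I M m x = Submodule.Quotient.mk (y k) :=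
    eval_eq_mk_of_sub_of_mem_pow_smul hmk (hxy k)
  have b_cauchy (n : ℕ) : b n ≡ b (n + 1) [SMOD (I ^ n • ⊤ : Submodule R N)] := by
    have sub_mem : y (n + c) - y (n + 1 + c) ∈ I ^ (n + c) • (⊤ : Submodule R M) :=
      (Submodule.Quotient.eq _).1 ((eval_eq le_rfl).symm.trans (eval_eq (by lia)))
    exact SModEq.sub_mem.2 (hc n sub_mem)
  refine ⟨mk I N (AdicCauchySequence.mk I N b b_cauchy), ?_⟩
  ext n
  exact (eval_eq (Nat.le_add_right n c)).symm

theorem span_range_of_eq_top [Module.Finite R M] :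
    span (AdicCompletion I R) (Set.range (of I M)) = ⊤ := by
  refine eq_top_iff.2 fun x _ ↦ ?_
  obtain ⟨t, rfl⟩ := ofTensorProduct_surjective_of_finite I M x
  induction t with
  | zero => simp
  | tmul r y => exact smul_mem _ r (subset_span ⟨y, rfl⟩)
  | add s t hs ht => simpa only [map_add] using add_mem (hs trivial) (ht trivial)

theorem range_map_subtype_eq_span (N : Submodule R M) [Module.Finite R N] :
    LinearMap.range (map I N.subtype) = span (AdicCompletion I R) (of I M '' N) := by
  have image_range_of : map I N.subtype '' Set.range (of I N) = of I M '' N := by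
    rw [← Set.range_comp, Set.image_eq_range]
    rfl
  rw [LinearMap.range_eq_map, ← span_range_of_eq_top, map_span, image_range_of]

theorem dense_submodule_of_completion_closure_general [IsNoetherianRing R] [Module.Finite R M]
    (N' : Submodule (AdicCompletion I R) (AdicCompletion I M)) (N : Submodule R M)
    [IsHausdorff I (M ⧸ N)] (hNN' : ∀ y ∈ N, of I M y ∈ N')
    (hdense : (N' : Set (AdicCompletion I M)) ⊆ adicClosure I N) :
    (∀ z : M, of I M z ∈ N' → z ∈ N) ∧ (N' : Set (AdicCompletion I M)) = adicClosure I N := by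
  refine ⟨fun z hz ↦ mem_of_of_mem_adicClosure (hdense hz), hdense.antisymm ?_⟩
  calc adicClosure I N ⊆ LinearMap.range (map I N.subtype) :=
        adicClosure_subset_range_map_subtype I N
    _ = span (AdicCompletion I R) (of I M '' N) := by rw [range_map_subtype_eq_span]
    _ ⊆ N' := span_le.2 (Set.image_subset_iff.2 hNN')

end AdicClosure

/-- Let `R` be a commutative Noetherian local ring with maximal ideal
`𝔪` and `M` a finitely generated `R`-module, with `𝔪`-adic completion `M^∧` regarded as
a module over `R^∧`.  Let `N'` be an `R^∧`-submodule of `M^∧` and `N ⊆ M ∩ N'` an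
`R`-submodule which is `𝔪`-adically dense in `N'`.  Then `N = M ∩ N'` and `N'` is the
closure (`𝔪`-adic completion) of `N` in `M^∧`. -/
theorem dense_submodule_of_completion_closure
    (R : Type*) [CommRing R] [IsNoetherianRing R] [IsLocalRing R]
    (M : Type*) [AddCommGroup M] [Module R M] [Module.Finite R M]
    (N' : Submodule (AdicCompletion (IsLocalRing.maximalIdeal R) R)
      (AdicCompletion (IsLocalRing.maximalIdeal R) M))
    (N : Submodule R M)
    (hNN' : ∀ y ∈ N, AdicCompletion.of (IsLocalRing.maximalIdeal R) M y ∈ N')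
    (hdense : ∀ x ∈ N', ∀ k : ℕ, ∃ y ∈ N,
      x - AdicCompletion.of (IsLocalRing.maximalIdeal R) M y ∈
        (IsLocalRing.maximalIdeal R) ^ k •
          (⊤ : Submodule R (AdicCompletion (IsLocalRing.maximalIdeal R) M))) :
    (∀ z : M, AdicCompletion.of (IsLocalRing.maximalIdeal R) M z ∈ N' → z ∈ N) ∧
    ((N' : Set (AdicCompletion (IsLocalRing.maximalIdeal R) M)) =
      {x | ∀ k : ℕ, ∃ y ∈ N,
        x - AdicCompletion.of (IsLocalRing.maximalIdeal R) M y ∈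
          (IsLocalRing.maximalIdeal R) ^ k •
            (⊤ : Submodule R (AdicCompletion (IsLocalRing.maximalIdeal R) M))}) := by
  exact dense_submodule_of_completion_closure_general _ N' N hNN' hdense
end
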